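/- Let d > 2 be an integer and c₀ > 0. There exist constants c > 0, C > 0 and α₀ ∈ (0,1), depending only on d and c₀, such that for all α ∈ (0, α₀) and all x ∈ ℤ^d with ‖x‖ ≥ c₀/√α: g_α(x) ≤ C·e^{−c·‖x‖·√α}·g(x). -/

import Mathlib

/-!
For `d > 2` the shifted Newtonian potential `f(x) = (‖x‖ ^ 2 + A) ^ (1 - d / 2)` has discrete
Laplacian with leading term `(1 - d / 2) (A + 1) ‖x‖ ^ (- d - 2)`, whose sign is that of `-A` when
`|A|` is large. Hence `f` is superharmonic for large positive `A` and dominates a multiple of the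
Green's function by comparison with its partial sums, while the potential with a very negative `A`
is subharmonic far from the origin and is dominated by a multiple of the Green's function by the
maximum principle.

For the killed walk, tilt the superharmonic potential by `exp (-ε x_i)` with `|ε|` a small multiple
of `√α`. Since `|∇f| = O(f / ‖x‖)`, the tilt changes `P f` by a factor at most `1 + α` at distance
at least `1 / √α` from the origin, and killing compensates this; within that distance the tilt is
bounded below and the estimate without killing suffices. Choosing `i` with `|x_i|` maximal and the
sign of `ε` to be that of `x_i` turns the tilt into `exp (-c ‖x‖ √α)`.
-/

open Filter

noncomputable section

/-- `srwP d k x` is the probability that the simple random walk on `ℤ^d`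
started at `0` is at `x` at time `k`. -/
def srwP (d : ℕ) : ℕ → (Fin d → ℤ) → ENNReal
  | 0, x => if x = 0 then 1 else 0
  | k + 1, x =>
      (2 * d : ENNReal)⁻¹ *
        ∑ i : Fin d, (srwP d k (x - Pi.single i 1) + srwP d k (x + Pi.single i 1))

/-- The Euclidean norm on `ℤ^d`. -/
def nrmZ (d : ℕ) (x : Fin d → ℤ) : ℝ := Real.sqrt (∑ i, ((x i : ℝ)) ^ 2)

/-- The Green's function of the simple random walk on `ℤ^d`. -/
def green (d : ℕ) (x : Fin d → ℤ) : ENNReal := ∑' k : ℕ, srwP d k x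

/-- Convolution of two `[0,∞]`-valued functions on `ℤ^d`. -/
def convE (d : ℕ) (f h : (Fin d → ℤ) → ENNReal) (z : Fin d → ℤ) : ENNReal :=
  ∑' x, f x * h (z - x)


/-- The Green's function `g_α(x) = Σ_k (1−α)^k P(X_k = x)` of the killed walk. -/
def greenK (d : ℕ) (α : ℝ) (x : Fin d → ℤ) : ENNReal :=
  ∑' k : ℕ, ENNReal.ofReal ((1 - α) ^ k) * srwP d k x

/-! ### Binomial expansion -/

lemma exists_abs_one_add_rpow_sub_sum_choose_le (a : ℝ) {r : ℝ} (hr₀ : 0 < r) (hr₁ : r < 1) :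
    ∃ K > 0, ∀ (n : ℕ) (u : ℝ), |u| < r →
      |(1 + u) ^ a - ∑ k ∈ Finset.range n, Ring.choose a k * u ^ k| ≤ K * (|u| / r) ^ n := by
  lift r to NNReal using hr₀.le
  obtain ⟨b, ⟨hb₀, hb₁⟩, K, hK, h⟩ :=
    (Real.one_add_rpow_hasFPowerSeriesOnBall_zero (a := a)).uniform_geometric_approx' (r' := r)
      (by exact_mod_cast hr₁)
  refine ⟨K, hK, fun n u hu ↦ ?_⟩
  have hsum : (binomialSeries ℝ a).partialSum n u =
      ∑ k ∈ Finset.range n, Ring.choose a k * u ^ k :=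
    Finset.sum_congr rfl fun k _ ↦ by
      simp [binomialSeries, FormalMultilinearSeries.coeff_ofScalars, mul_comm]
  calc _ ≤ K * (b * (|u| / r)) ^ n := by simpa [hsum] using h u (by simpa using hu) n
    _ ≤ K * (|u| / r) ^ n := by
      gcongr
      exact mul_le_of_le_one_left (by positivity) hb₁.le

lemma exists_one_add_rpow_le_and_abs_sub_le (a : ℝ) :
    ∃ K > 0, (∀ u : ℝ, |u| < 1 / 2 → (1 + u) ^ a ≤ K) ∧
      ∀ u : ℝ, |u| < 1 / 2 → |(1 - u) ^ a - (1 + u) ^ a| ≤ K * |u| := by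
  obtain ⟨K, hK, h⟩ := exists_abs_one_add_rpow_sub_sum_choose_le a one_half_pos one_half_lt_one
  have hone (u : ℝ) (hu : |u| < 1 / 2) : |(1 + u) ^ a - 1| ≤ 2 * K * |u| :=
    (show _ ≤ K * (|u| / (1 / 2)) by simpa using h 1 u hu).trans_eq (by ring)
  refine ⟨4 * K, by positivity, fun u hu ↦ ?_, fun u hu ↦ ?_⟩
  · have hzero : |(1 + u) ^ a| ≤ K := by simpa using h 0 u hu
    linarith [le_abs_self ((1 + u) ^ a)]
  · have hneg := hone (-u) (by rwa [abs_neg])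
    rw [abs_neg, ← sub_eq_add_neg] at hneg
    refine (abs_sub_le _ 1 _).trans ?_
    rw [abs_sub_comm 1]
    linarith [hone u hu]

lemma ringChoose_two (a : ℝ) : Ring.choose a 2 = a * (a - 1) / 2 := by
  have hpoch : (descPochhammer ℤ 2).smeval a = a * (a - 1) := by
    simp [descPochhammer, Polynomial.smeval_mul, Polynomial.smeval_X, Polynomial.smeval_sub,
      Polynomial.smeval_one]
  rw [Ring.choose_eq_smul, hpoch, smul_eq_mul, Nat.factorial_two, Nat.cast_two, inv_mul_eq_div]

lemma exists_abs_one_add_rpow_sub_one_sub_le (a : ℝ) :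
    ∃ K > 0, ∀ u : ℝ, |u| < 1 / 2 → |(1 + u) ^ a - 1 - a * u| ≤ K * u ^ 2 := by
  obtain ⟨K, hK, h⟩ := exists_abs_one_add_rpow_sub_sum_choose_le a one_half_pos one_half_lt_one
  refine ⟨4 * K, by positivity, fun u hu ↦ ?_⟩
  have h₂ := h 2 u hu
  simp only [Finset.sum_range_succ, Finset.sum_range_zero, Ring.choose_zero_right,
    Ring.choose_one_right, div_pow, sq_abs] at h₂
  convert h₂ using 1
  · congr 1; ring
  · ring

lemma exists_abs_one_add_rpow_add_one_sub_rpow_le (a : ℝ) :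
    ∃ K > 0, ∀ u : ℝ, |u| < 1 / 2 →
      |(1 + u) ^ a + (1 - u) ^ a - 2 - a * (a - 1) * u ^ 2| ≤ K * u ^ 4 := by
  obtain ⟨K, hK, h⟩ := exists_abs_one_add_rpow_sub_sum_choose_le a one_half_pos one_half_lt_one
  refine ⟨32 * K, by positivity, fun u hu ↦ ?_⟩
  have hpos := h 4 u hu
  have hneg := h 4 (-u) (by rwa [abs_neg])
  simp only [Finset.sum_range_succ, Finset.sum_range_zero, Ring.choose_zero_right,
    Ring.choose_one_right, ringChoose_two, abs_neg, div_pow, Even.pow_abs (by decide : Even 4)]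
    at hpos hneg
  rw [← sub_eq_add_neg] at hneg
  rw [abs_le] at hpos hneg ⊢
  constructor <;> linarith

lemma exists_abs_sum_one_add_rpow_add_one_sub_rpow_le (a : ℝ) (d : ℕ) :
    ∃ K > 0, ∀ u : Fin d → ℝ, (∀ i, |u i| < 1 / 2) →
      |∑ i, ((1 + u i) ^ a + (1 - u i) ^ a) - 2 * d - a * (a - 1) * ∑ i, u i ^ 2| ≤
        K * (∑ i, u i ^ 2) ^ 2 := by
  obtain ⟨K, hK, h⟩ := exists_abs_one_add_rpow_add_one_sub_rpow_le a
  refine ⟨K, hK, fun u hu ↦ ?_⟩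
  calc _ = |∑ i, ((1 + u i) ^ a + (1 - u i) ^ a - 2 - a * (a - 1) * u i ^ 2)| := by
        simp [Finset.sum_sub_distrib, Finset.mul_sum, mul_comm]
    _ ≤ ∑ i, K * u i ^ 4 :=
        (Finset.abs_sum_le_sum_abs _ _).trans (Finset.sum_le_sum fun i _ ↦ h _ (hu i))
    _ = K * ∑ i, (u i ^ 2) ^ 2 := by simp only [← pow_mul, Finset.mul_sum]
    _ ≤ K * (∑ i, u i ^ 2) ^ 2 := by
        gcongr
        exact Finset.sum_sq_le_sq_sum_of_nonneg fun i _ ↦ sq_nonneg (u i)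

/-! ### The integer lattice -/

lemma int_lattice_induction {ι : Type*} [Finite ι] [DecidableEq ι] {p : (ι → ℤ) → Prop}
    (zero : p 0)
    (add_single : ∀ x i, p x → p (x + Pi.single i 1))
    (sub_single : ∀ x i, p x → p (x - Pi.single i 1)) (x : ι → ℤ) : p x := by
  cases nonempty_fintype ι
  have hline (i : ι) (n : ℤ) (y : ι → ℤ) (hy : p y) : p (y + Pi.single i n) := by
    induction n using Int.induction_on with
    | zero => simpa using hy
    | succ n ih => simpa [Pi.single_add, add_assoc] using add_single _ i ih
    | pred n ih => simpa [Pi.single_sub, add_sub_assoc] using sub_single _ i ih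
  have hpartial (s : Finset ι) : p (∑ i ∈ s, Pi.single i (x i)) := by
    induction s using Finset.induction_on with
    | empty => exact zero
    | insert i s his ih =>
      rw [Finset.sum_insert his, add_comm]
      exact hline i _ _ ih
  simpa [Finset.univ_sum_single] using hpartial Finset.univ

section Norm

variable {d : ℕ}

lemma nrmZ_nonneg (x : Fin d → ℤ) : 0 ≤ nrmZ d x := Real.sqrt_nonneg _

lemma nrmZ_sq (x : Fin d → ℤ) : nrmZ d x ^ 2 = ∑ i, (x i : ℝ) ^ 2 :=
  Real.sq_sqrt (Finset.sum_nonneg fun _ _ ↦ sq_nonneg _)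

lemma abs_apply_le_nrmZ (x : Fin d → ℤ) (i : Fin d) : |(x i : ℝ)| ≤ nrmZ d x :=
  Real.abs_le_sqrt <|
    Finset.single_le_sum (f := fun i ↦ (x i : ℝ) ^ 2) (fun _ _ ↦ sq_nonneg _) (Finset.mem_univ i)

lemma nrmZ_add_single_sq (x : Fin d → ℤ) (i : Fin d) :
    nrmZ d (x + Pi.single i 1) ^ 2 = nrmZ d x ^ 2 + 2 * x i + 1 := by
  have hterm (j : Fin d) : (((x + Pi.single i 1 : Fin d → ℤ) j : ℤ) : ℝ) ^ 2 =
      (x j : ℝ) ^ 2 + if j = i then 2 * (x i : ℝ) + 1 else 0 := by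
    by_cases hj : j = i
    · subst hj
      simp only [Pi.add_apply, Pi.single_eq_same, Int.cast_add, Int.cast_one, if_true]
      ring
    · simp [hj]
  rw [nrmZ_sq, nrmZ_sq, Finset.sum_congr rfl fun j _ ↦ hterm j, Finset.sum_add_distrib]
  simp [add_assoc]

lemma nrmZ_sub_single_sq (x : Fin d → ℤ) (i : Fin d) :
    nrmZ d (x - Pi.single i 1) ^ 2 = nrmZ d x ^ 2 - 2 * x i + 1 := by
  have h := nrmZ_add_single_sq (x - Pi.single i 1) i
  simp only [sub_add_cancel, Pi.sub_apply, Pi.single_eq_same, Int.cast_sub, Int.cast_one] at h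
  linarith

lemma exists_nrmZ_le_sqrt_mul_abs_apply (hd : 0 < d) (x : Fin d → ℤ) :
    ∃ i, nrmZ d x ≤ √d * |(x i : ℝ)| := by
  obtain ⟨i, -, hi⟩ := Finset.exists_max_image Finset.univ (fun i ↦ (x i : ℝ) ^ 2)
    ⟨⟨0, hd⟩, Finset.mem_univ _⟩
  refine ⟨i, ?_⟩
  rw [nrmZ, ← Real.sqrt_sq_eq_abs, ← Real.sqrt_mul (Nat.cast_nonneg d)]
  exact Real.sqrt_le_sqrt (by simpa using Finset.sum_le_card_nsmul Finset.univ _ _ hi)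

lemma tendsto_nrmZ_cofinite (d : ℕ) : Tendsto (nrmZ d) cofinite atTop := by
  have hnorm : Tendsto (fun x : Fin d → ℤ ↦ ‖x‖) cofinite atTop :=
    cocompact_eq_cofinite (Fin d → ℤ) ▸ tendsto_norm_cocompact_atTop
  refine tendsto_atTop_mono (fun x ↦ ?_) hnorm
  refine (pi_norm_le_iff_of_nonneg (nrmZ_nonneg x)).2 fun i ↦ ?_
  simpa [Int.norm_eq_abs] using abs_apply_le_nrmZ x i

end Norm

/-! ### The averaging operator -/

/-- The transition operator `P` of the walk on real functions: `P f x` is the mean of `f` over the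
`2d` neighbours of `x`. A function is superharmonic when `P f ≤ f`. -/
def nbrAvg (d : ℕ) : Module.End ℝ ((Fin d → ℤ) → ℝ) where
  toFun f x := (2 * d : ℝ)⁻¹ * ∑ i, (f (x - Pi.single i 1) + f (x + Pi.single i 1))
  map_add' f g := by
    ext x
    simp only [Pi.add_apply, add_add_add_comm, Finset.sum_add_distrib, mul_add]
  map_smul' a f := by
    ext x
    simp only [Pi.smul_apply, smul_eq_mul, ← mul_add, ← Finset.mul_sum, RingHom.id_apply]
    ring

section NbrAvg

variable {d : ℕ}

lemma nbrAvg_apply (f : (Fin d → ℤ) → ℝ) (x : Fin d → ℤ) :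
    nbrAvg d f x = (2 * d : ℝ)⁻¹ * ∑ i, (f (x - Pi.single i 1) + f (x + Pi.single i 1)) := rfl

lemma nbrAvg_mono : Monotone (nbrAvg d) := fun f g hfg x ↦ by
  simp only [nbrAvg_apply]
  gcongr <;> apply hfg

lemma continuous_nbrAvg : Continuous (nbrAvg d) :=
  continuous_pi fun x ↦ by
    simp only [nbrAvg_apply]
    fun_prop

lemma nbrAvg_le_of_forall_le {f : (Fin d → ℤ) → ℝ} {a : ℝ} (ha : 0 ≤ a) (hf : ∀ y, f y ≤ a)
    (x : Fin d → ℤ) : nbrAvg d f x ≤ a := by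
  have hsum : ∑ i, (f (x - Pi.single i 1) + f (x + Pi.single i 1)) ≤ 2 * d * a := by
    calc _ ≤ ∑ _i : Fin d, (a + a) := Finset.sum_le_sum fun i _ ↦ add_le_add (hf _) (hf _)
      _ = 2 * d * a := by
        rw [Finset.sum_const, Finset.card_univ, Fintype.card_fin, nsmul_eq_mul]
        ring
  exact inv_mul_le_of_le_mul₀ (by positivity) ha hsum

lemma pos_of_nbrAvg_le {f : (Fin d → ℤ) → ℝ} (hf₀ : 0 ≤ f) (hf : nbrAvg d f ≤ f) (h0 : 0 < f 0)
    (x : Fin d → ℤ) : 0 < f x := by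
  have hstep (y : Fin d → ℤ) (i : Fin d)
      (h : 0 < f (y - Pi.single i 1) + f (y + Pi.single i 1)) : 0 < f y := by
    have hd : (0 : ℝ) < d := by exact_mod_cast i.pos
    refine lt_of_lt_of_le (mul_pos (by positivity) ?_) (hf y)
    exact Finset.sum_pos' (fun j _ ↦ add_nonneg (hf₀ _) (hf₀ _)) ⟨i, Finset.mem_univ i, h⟩
  refine int_lattice_induction (p := fun y ↦ 0 < f y) h0 (fun y i hy ↦ hstep _ i ?_)
    (fun y i hy ↦ hstep _ i ?_) x
  · exact add_pos_of_pos_of_nonneg (by simpa using hy) (hf₀ _)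
  · exact add_pos_of_nonneg_of_pos (hf₀ _) (by simpa using hy)

/-- A positive maximum of `h` would be attained off `S`, where strict subharmonicity forbids it. -/
lemma nonpos_of_lt_nbrAvg {h : (Fin d → ℤ) → ℝ} {S : Set (Fin d → ℤ)}
    (hlim : ∀ η > 0, ∀ᶠ x in cofinite, h x ≤ η) (hS : ∀ x ∈ S, h x ≤ 0)
    (hsub : ∀ x ∉ S, h x < nbrAvg d h x) (x : Fin d → ℤ) : h x ≤ 0 := by
  by_contra! hx
  obtain ⟨z, hz⟩ := (continuous_of_discreteTopology (f := h)).exists_forall_ge' x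
    (by simpa only [cocompact_eq_cofinite] using hlim _ hx)
  have hzpos : 0 < h z := hx.trans_le (hz x)
  have hzS : z ∉ S := fun hmem ↦ (hS z hmem).not_gt hzpos
  exact (hsub z hzS).not_ge (nbrAvg_le_of_forall_le hzpos.le hz z)

lemma exists_forall_le_mul_of_lt_nbrAvg {u g : (Fin d → ℤ) → ℝ} {S : Set (Fin d → ℤ)}
    (hS : S.Finite) (hu : Tendsto u cofinite (nhds 0)) (husub : ∀ x ∉ S, u x < nbrAvg d u x)
    (hg : ∀ x, 0 < g x) (hgsup : nbrAvg d g ≤ g) : ∃ C > 0, ∀ x, u x ≤ C * g x := by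
  obtain ⟨C, hC⟩ := (hS.image fun x ↦ u x / g x).bddAbove
  have hC' : C ≤ max C 1 := le_max_left _ _
  refine ⟨max C 1, by positivity, fun x ↦ sub_nonpos.1 ?_⟩
  refine nonpos_of_lt_nbrAvg (h := u - max C 1 • g) (S := S) (fun η hη ↦ ?_) (fun y hy ↦ ?_)
    (fun y hy ↦ ?_) x
  · filter_upwards [hu.eventually_le_const hη] with y hy
    exact (sub_le_self _ (mul_pos (by positivity) (hg y)).le).trans hy
  · exact sub_nonpos.2 ((div_le_iff₀ (hg y)).1 ((hC ⟨y, hy, rfl⟩).trans hC'))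
  · rw [map_sub, map_smul]
    have hle : max C 1 * nbrAvg d g y ≤ max C 1 * g y := by gcongr; exact hgsup y
    exact (sub_le_sub_left hle _).trans_lt' (sub_lt_sub_right (husub y hy) _)

end NbrAvg

/-! ### Green's functions -/

/-- The real-valued transition probability `P(X_k = x)`, that is `P ^ k` applied to the point mass
at `0`. -/
def srwProb (d k : ℕ) : (Fin d → ℤ) → ℝ := (nbrAvg d ^ k) (Pi.single 0 1)

/-- The partial sums `∑_{k < n} q ^ k P(X_k = x)` of the Green's series of the walk that survives
each step with probability `q`. -/
def greenPartial (d : ℕ) (q : ℝ) (n : ℕ) : (Fin d → ℤ) → ℝ :=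
  ∑ k ∈ Finset.range n, q ^ k • srwProb d k

section Green

variable {d : ℕ}

lemma srwProb_succ (d k : ℕ) : srwProb d (k + 1) = nbrAvg d (srwProb d k) := by
  rw [srwProb, pow_succ', Module.End.mul_apply, srwProb]

lemma srwProb_nonneg (d k : ℕ) : 0 ≤ srwProb d k := by
  induction k with
  | zero => simp [srwProb]
  | succ k ih => simpa [srwProb_succ] using nbrAvg_mono ih

lemma srwP_eq_ofReal (k : ℕ) (x : Fin d → ℤ) : srwP d k x = ENNReal.ofReal (srwProb d k x) := by
  obtain rfl | hd := d.eq_zero_or_pos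
  · cases k with
    | zero => simp [srwP, srwProb, Subsingleton.elim x 0]
    | succ k => simp [srwP, srwProb_succ, nbrAvg_apply]
  induction k generalizing x with
  | zero => by_cases hx : x = 0 <;> simp [srwP, srwProb, hx]
  | succ k ih =>
    have hnn := srwProb_nonneg d k
    rw [srwProb_succ, nbrAvg_apply, ENNReal.ofReal_mul (by positivity),
      ENNReal.ofReal_inv_of_pos (by positivity),
      ENNReal.ofReal_sum_of_nonneg fun i _ ↦ add_nonneg (hnn _) (hnn _)]
    simp [srwP, ih, ENNReal.ofReal_add (hnn _) (hnn _), ENNReal.ofReal_mul]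

lemma greenPartial_succ (d : ℕ) (q : ℝ) (n : ℕ) :
    greenPartial d q (n + 1) = Pi.single 0 1 + q • nbrAvg d (greenPartial d q n) := by
  rw [greenPartial, Finset.sum_range_succ', add_comm]
  simp [greenPartial, srwProb_succ, Finset.smul_sum, smul_smul, pow_succ',
    show srwProb d 0 = Pi.single 0 1 from rfl]

lemma greenPartial_mono_left {q r : ℝ} (hq : 0 ≤ q) (hqr : q ≤ r) (n : ℕ) :
    greenPartial d q n ≤ greenPartial d r n :=
  Finset.sum_le_sum fun k _ ↦
    smul_le_smul_of_nonneg_right (pow_le_pow_left₀ hq hqr k) (srwProb_nonneg d k)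

lemma sum_ofReal_mul_srwP {q : ℝ} (hq : 0 ≤ q) (n : ℕ) (x : Fin d → ℤ) :
    ∑ k ∈ Finset.range n, ENNReal.ofReal (q ^ k) * srwP d k x =
      ENNReal.ofReal (greenPartial d q n x) := by
  simp only [greenPartial, Finset.sum_apply, Pi.smul_apply, smul_eq_mul]
  rw [ENNReal.ofReal_sum_of_nonneg fun k _ ↦
    mul_nonneg (pow_nonneg hq k) (srwProb_nonneg d k x)]
  simp [srwP_eq_ofReal, ENNReal.ofReal_mul (pow_nonneg hq _)]

lemma greenK_le_ofReal {α : ℝ} (hα : α ≤ 1) {x : Fin d → ℤ} {b : ℝ}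
    (h : ∀ n, greenPartial d (1 - α) n x ≤ b) : greenK d α x ≤ ENNReal.ofReal b :=
  ENNReal.tsum_le_of_sum_range_le fun n ↦ by
    rw [sum_ofReal_mul_srwP (sub_nonneg.2 hα)]
    exact ENNReal.ofReal_le_ofReal (h n)

lemma greenK_zero (d : ℕ) (x : Fin d → ℤ) : greenK d 0 x = green d x := by
  simp [greenK, green]

lemma tendsto_greenPartial_one {x : Fin d → ℤ} (hx : green d x ≠ ⊤) :
    Tendsto (fun n ↦ greenPartial d 1 n x) atTop (nhds (green d x).toReal) := by
  have hsum (n : ℕ) :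
      (∑ k ∈ Finset.range n, srwP d k x).toReal = greenPartial d 1 n x := by
    have hnn : 0 ≤ greenPartial d 1 n x := by
      simpa [greenPartial] using Finset.sum_nonneg fun k _ ↦ srwProb_nonneg d k x
    rw [← ENNReal.toReal_ofReal hnn, ← sum_ofReal_mul_srwP zero_le_one]
    simp
  simpa only [Function.comp_def, hsum] using
    (ENNReal.tendsto_toReal hx).comp (ENNReal.tendsto_nat_tsum fun k ↦ srwP d k x)

lemma toReal_green_eq (h : ∀ x : Fin d → ℤ, green d x ≠ ⊤) :
    (fun x ↦ (green d x).toReal) = Pi.single 0 1 + nbrAvg d fun x ↦ (green d x).toReal := by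
  have hlim : Tendsto (greenPartial d 1) atTop (nhds fun x ↦ (green d x).toReal) :=
    tendsto_pi_nhds.2 fun x ↦ tendsto_greenPartial_one (h x)
  refine tendsto_nhds_unique (hlim.comp (tendsto_add_atTop_nat 1)) ?_
  simpa only [Function.comp_def, greenPartial_succ, one_smul] using
    ((continuous_nbrAvg.tendsto _).comp hlim).const_add (Pi.single 0 1)

lemma nbrAvg_toReal_green_le (h : ∀ x : Fin d → ℤ, green d x ≠ ⊤) :
    nbrAvg d (fun x ↦ (green d x).toReal) ≤ fun x ↦ (green d x).toReal := by
  conv_rhs => rw [toReal_green_eq h]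
  exact le_add_of_nonneg_left (Pi.single_nonneg.2 zero_le_one)

lemma toReal_green_pos (h : ∀ x : Fin d → ℤ, green d x ≠ ⊤) (x : Fin d → ℤ) :
    0 < (green d x).toReal := by
  refine pos_of_nbrAvg_le (f := fun x ↦ (green d x).toReal) (fun _ ↦ ENNReal.toReal_nonneg)
    (nbrAvg_toReal_green_le h) ?_ x
  have hnn : 0 ≤ nbrAvg d fun x ↦ (green d x).toReal := by
    rw [← map_zero (nbrAvg d)]
    exact nbrAvg_mono fun x ↦ ENNReal.toReal_nonneg
  have hzero := congrFun (toReal_green_eq h) 0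
  rw [Pi.add_apply, Pi.single_eq_same] at hzero
  exact hzero ▸ add_pos_of_pos_of_nonneg one_pos (hnn 0)

/-- The partial sums satisfy `G_{n+1} = δ₀ + q P G_n`, so they stay below any nonnegative
supersolution of this recursion. -/
lemma greenPartial_le_of_nbrAvg_le {q : ℝ} (hq : 0 ≤ q) {φ : (Fin d → ℤ) → ℝ} (hφ : 0 ≤ φ)
    {D : Set (Fin d → ℤ)} (hD : ∀ x ∈ D, (Pi.single 0 1 + q • nbrAvg d φ : _ → ℝ) x ≤ φ x)
    (hDc : ∀ x ∉ D, ∀ n, greenPartial d q n x ≤ φ x) (n : ℕ) : greenPartial d q n ≤ φ := by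
  induction n with
  | zero => simpa [greenPartial] using hφ
  | succ n ih =>
    intro x
    by_cases hx : x ∈ D
    · refine le_trans ?_ (hD x hx)
      rw [greenPartial_succ]
      simp only [Pi.add_apply, Pi.smul_apply, smul_eq_mul]
      gcongr
      exact nbrAvg_mono ih x
    · exact hDc x hx _

lemma exists_greenPartial_one_le_smul {f : (Fin d → ℤ) → ℝ} (hf₀ : 0 ≤ f) (hf : nbrAvg d f ≤ f)
    (h0 : nbrAvg d f 0 < f 0) : ∃ C > (0 : ℝ), ∀ n, greenPartial d 1 n ≤ C • f := by
  have hgap : 0 < f 0 - nbrAvg d f 0 := sub_pos.2 h0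
  have hC : 0 < (f 0 - nbrAvg d f 0)⁻¹ := inv_pos.2 hgap
  refine ⟨(f 0 - nbrAvg d f 0)⁻¹, hC, greenPartial_le_of_nbrAvg_le zero_le_one
    (smul_nonneg hC.le hf₀) (D := Set.univ) (fun x _ ↦ ?_) (fun x hx ↦ absurd trivial hx)⟩
  simp only [map_smul, one_smul, Pi.add_apply, Pi.smul_apply, smul_eq_mul]
  obtain rfl | hx := eq_or_ne x 0
  · have := inv_mul_cancel₀ hgap.ne'
    rw [Pi.single_eq_same]
    linarith
  · rw [Pi.single_eq_of_ne hx, zero_add]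
    exact mul_le_mul_of_nonneg_left (hf x) hC.le

end Green

/-! ### Shifted Newtonian potentials -/

/-- The Newtonian potential `‖x‖ ^ (2 - d)` with `‖x‖ ^ 2` shifted by `A`. It is superharmonic for
large `A`, and subharmonic far from the origin for `A` very negative. -/
def newtonPotential (d : ℕ) (A : ℝ) (x : Fin d → ℤ) : ℝ := (nrmZ d x ^ 2 + A) ^ (1 - d / 2 : ℝ)

section NewtonPotential

variable {d : ℕ}

lemma newtonPotential_pos {A : ℝ} (hA : 0 < A) (x : Fin d → ℤ) : 0 < newtonPotential d A x :=
  Real.rpow_pos_of_pos (by positivity) _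

lemma newtonPotential_le_of_le (hd : 2 ≤ d) {A B : ℝ} {x : Fin d → ℤ}
    (hB : 0 < nrmZ d x ^ 2 + B) (hBA : B ≤ A) :
    newtonPotential d A x ≤ newtonPotential d B x := by
  have hd' : (2 : ℝ) ≤ d := by exact_mod_cast hd
  exact Real.rpow_le_rpow_of_nonpos hB (by linarith) (by linarith)

lemma tendsto_newtonPotential_cofinite (hd : 2 < d) (A : ℝ) :
    Tendsto (newtonPotential d A) cofinite (nhds 0) := by
  have hd' : (2 : ℝ) < d := by exact_mod_cast hd
  have hbase : Tendsto (fun x ↦ nrmZ d x ^ 2 + A) cofinite atTop :=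
    tendsto_atTop_add_const_right _ _ <|
      (tendsto_pow_atTop two_ne_zero).comp (tendsto_nrmZ_cofinite d)
  have hexp := (tendsto_rpow_neg_atTop (y := d / 2 - 1) (by linarith)).comp hbase
  simpa only [neg_sub, Function.comp_def] using! hexp

lemma newtonPotential_eq_mul {A u v : ℝ} {x : Fin d → ℤ} (hv : 0 ≤ v) (hu : -1 ≤ u)
    (h : nrmZ d x ^ 2 + A = v * (1 + u)) :
    newtonPotential d A x = v ^ (1 - d / 2 : ℝ) * (1 + u) ^ (1 - d / 2 : ℝ) := by
  rw [newtonPotential, h, Real.mul_rpow hv (by linarith)]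

lemma newtonPotential_eq {A v : ℝ} {x : Fin d → ℤ} (hv : 1 ≤ v) (h : nrmZ d x ^ 2 + A + 1 = v) :
    newtonPotential d A x = v ^ (1 - d / 2 : ℝ) * (1 + -v⁻¹) ^ (1 - d / 2 : ℝ) := by
  refine newtonPotential_eq_mul (by positivity) (neg_le_neg (inv_le_one_of_one_le₀ hv)) ?_
  have hv₀ : v ≠ 0 := by positivity
  field_simp
  linarith

lemma newtonPotential_add_single {A v : ℝ} {x : Fin d → ℤ} {i : Fin d} (hv : 0 < v)
    (h : nrmZ d x ^ 2 + A + 1 = v) (hu : |2 * x i / v| < 1 / 2) :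
    newtonPotential d A (x + Pi.single i 1) =
      v ^ (1 - d / 2 : ℝ) * (1 + 2 * x i / v) ^ (1 - d / 2 : ℝ) := by
  refine newtonPotential_eq_mul hv.le (by linarith [(abs_lt.1 hu).1]) ?_
  rw [nrmZ_add_single_sq]
  field_simp
  linarith

lemma newtonPotential_sub_single {A v : ℝ} {x : Fin d → ℤ} {i : Fin d} (hv : 0 < v)
    (h : nrmZ d x ^ 2 + A + 1 = v) (hu : |2 * x i / v| < 1 / 2) :
    newtonPotential d A (x - Pi.single i 1) =
      v ^ (1 - d / 2 : ℝ) * (1 - 2 * x i / v) ^ (1 - d / 2 : ℝ) := by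
  rw [sub_eq_add_neg 1]
  refine newtonPotential_eq_mul hv.le (by linarith [(abs_lt.1 hu).2]) ?_
  rw [nrmZ_sub_single_sq]
  field_simp
  linarith

lemma abs_two_mul_apply_div_lt {v : ℝ} (hv : 32 < v) {x : Fin d → ℤ} (hx : nrmZ d x ^ 2 ≤ 2 * v)
    (i : Fin d) : |2 * x i / v| < 1 / 2 := by
  have hv₀ : 0 < v := by linarith
  have hxi : (x i : ℝ) ^ 2 ≤ nrmZ d x ^ 2 := sq_le_sq' (neg_le_of_abs_le (abs_apply_le_nrmZ x i))
    (le_of_abs_le (abs_apply_le_nrmZ x i))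
  refine abs_lt_of_sq_lt_sq ?_ (by norm_num)
  rw [div_pow, div_lt_iff₀ (pow_pos hv₀ 2)]
  nlinarith

lemma sum_sq_two_mul_apply_div (v : ℝ) (x : Fin d → ℤ) :
    ∑ i, (2 * x i / v) ^ 2 = 4 * nrmZ d x ^ 2 / v ^ 2 := by
  simp only [div_pow, mul_pow, nrmZ_sq, ← Finset.sum_div, ← Finset.mul_sum]
  norm_num

lemma nbrAvg_newtonPotential_eq {A v : ℝ} {x : Fin d → ℤ} (hv : 0 < v)
    (h : nrmZ d x ^ 2 + A + 1 = v) (hu : ∀ i, |2 * x i / v| < 1 / 2) :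
    nbrAvg d (newtonPotential d A) x = (2 * d : ℝ)⁻¹ * (v ^ (1 - d / 2 : ℝ) *
      ∑ i, ((1 + 2 * x i / v) ^ (1 - d / 2 : ℝ) + (1 - 2 * x i / v) ^ (1 - d / 2 : ℝ))) := by
  simp only [nbrAvg_apply, newtonPotential_add_single hv h (hu _),
    newtonPotential_sub_single hv h (hu _), Finset.mul_sum, mul_add, add_comm]

/-- In terms of `v = ‖x‖ ^ 2 + A + 1`, the neighbours `x ± e_i` have shifted squared norm
`v (1 ± 2 x_i / v)`. The second-order term of the binomial expansion cancels `‖x‖ ^ 2 / v ^ 2` from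
the first-order term at `x` itself, so only the shift survives. -/
lemma exists_abs_nbrAvg_newtonPotential_sub_le (hd : 0 < d) :
    ∃ K > 0, ∀ (A v : ℝ) (x : Fin d → ℤ), nrmZ d x ^ 2 + A + 1 = v → 32 < v →
      nrmZ d x ^ 2 ≤ 2 * v →
      |nbrAvg d (newtonPotential d A) x - newtonPotential d A x -
        (1 - d / 2) * (A + 1) * (v ^ (1 - d / 2 : ℝ) / v ^ 2)| ≤
          K * (v ^ (1 - d / 2 : ℝ) / v ^ 2) := by
  obtain ⟨K₁, hK₁, hsum⟩ := exists_abs_sum_one_add_rpow_add_one_sub_rpow_le (1 - d / 2) d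
  obtain ⟨K₂, hK₂, hself⟩ := exists_abs_one_add_rpow_sub_one_sub_le (1 - d / 2)
  refine ⟨64 * K₁ + K₂, by positivity, fun A v x hA hv hx ↦ ?_⟩
  have hv₀ : 0 < v := by linarith
  have hd₁ : (1 : ℝ) ≤ d := by exact_mod_cast hd
  set w := v ^ (1 - d / 2 : ℝ)
  have hu := abs_two_mul_apply_div_lt hv hx
  set S := ∑ i, ((1 + 2 * x i / v) ^ (1 - d / 2 : ℝ) + (1 - 2 * x i / v) ^ (1 - d / 2 : ℝ))
  set T := (1 + -v⁻¹) ^ (1 - d / 2 : ℝ)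
  have havg : nbrAvg d (newtonPotential d A) x = (2 * d : ℝ)⁻¹ * (w * S) :=
    nbrAvg_newtonPotential_eq hv₀ hA hu
  have hpot : newtonPotential d A x = w * T := newtonPotential_eq (by linarith) hA
  have hS : |S - 2 * d - (1 - d / 2) * (1 - d / 2 - 1) * (4 * nrmZ d x ^ 2 / v ^ 2)| ≤
      64 * K₁ / v ^ 2 := by
    refine (sum_sq_two_mul_apply_div v x ▸ hsum _ hu).trans ?_
    calc K₁ * (4 * nrmZ d x ^ 2 / v ^ 2) ^ 2 ≤ K₁ * (4 * (2 * v) / v ^ 2) ^ 2 := by gcongr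
      _ = 64 * K₁ / v ^ 2 := by field_simp; norm_num
  have hT : |T - 1 - (1 - d / 2) * -v⁻¹| ≤ K₂ / v ^ 2 := by
    refine (hself (-v⁻¹) ?_).trans_eq (by rw [neg_sq, inv_pow, div_eq_mul_inv])
    rw [abs_neg, abs_of_pos (inv_pos.2 hv₀)]
    exact inv_lt_of_inv_lt₀ (by norm_num) (by linarith)
  calc _ = |w * ((2 * d : ℝ)⁻¹ *
          (S - 2 * d - (1 - d / 2) * (1 - d / 2 - 1) * (4 * nrmZ d x ^ 2 / v ^ 2)) -
            (T - 1 - (1 - d / 2) * -v⁻¹))| := by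
        rw [havg, hpot, show A + 1 = v - nrmZ d x ^ 2 by linarith]
        congr 1
        field_simp
        ring
    _ ≤ w * (1 * (64 * K₁ / v ^ 2) + K₂ / v ^ 2) := by
        rw [abs_mul, abs_of_pos (by positivity : 0 < w)]
        gcongr
        refine (abs_sub _ _).trans (add_le_add ?_ hT)
        rw [abs_mul, abs_of_pos (by positivity : 0 < (2 * d : ℝ)⁻¹)]
        gcongr
        exact inv_le_one_of_one_le₀ (by linarith)
    _ = (64 * K₁ + K₂) * (w / v ^ 2) := by ring

lemma eventually_nbrAvg_newtonPotential_lt (hd : 2 < d) :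
    ∀ᶠ A in atTop, ∀ x, nbrAvg d (newtonPotential d A) x < newtonPotential d A x := by
  obtain ⟨K, -, hK⟩ := exists_abs_nbrAvg_newtonPotential_sub_le (d := d) (by lia)
  have hd₂ : (2 : ℝ) < d := by exact_mod_cast hd
  have hd' : (0 : ℝ) < d / 2 - 1 := by linarith
  filter_upwards [eventually_gt_atTop 32, (tendsto_id.const_mul_atTop hd').eventually_gt_atTop K]
    with A hA hKA x
  have hx := sq_nonneg (nrmZ d x)
  have hle := (abs_le.1 (hK A _ x rfl (by linarith) (by linarith))).2
  rw [id] at hKA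
  have hneg : (K + (1 - d / 2) * (A + 1)) *
      ((nrmZ d x ^ 2 + A + 1) ^ (1 - d / 2 : ℝ) / (nrmZ d x ^ 2 + A + 1) ^ 2) < 0 :=
    mul_neg_of_neg_of_pos (by linarith) (by positivity)
  linarith

lemma eventually_lt_nbrAvg_newtonPotential_neg (hd : 2 < d) :
    ∀ᶠ A in atTop, ∀ x, 2 * A ≤ nrmZ d x ^ 2 →
      newtonPotential d (-A) x < nbrAvg d (newtonPotential d (-A)) x := by
  obtain ⟨K, -, hK⟩ := exists_abs_nbrAvg_newtonPotential_sub_le (d := d) (by lia)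
  have hd₂ : (2 : ℝ) < d := by exact_mod_cast hd
  have hd' : (0 : ℝ) < d / 2 - 1 := by linarith
  have hlim := (tendsto_atTop_add_const_right atTop (-1) tendsto_id).const_mul_atTop hd'
  filter_upwards [eventually_gt_atTop 32, hlim.eventually_gt_atTop K] with A hA hKA x hx
  have hge := (abs_le.1 (hK (-A) _ x rfl (by linarith) (by linarith))).1
  have hv : 0 < nrmZ d x ^ 2 + -A + 1 := by linarith
  have hpos : 0 < ((1 - d / 2) * (-A + 1) - K) *
      ((nrmZ d x ^ 2 + -A + 1) ^ (1 - d / 2 : ℝ) / (nrmZ d x ^ 2 + -A + 1) ^ 2) :=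
    mul_pos (by rw [id] at hKA; linarith) (by positivity)
  linarith

/-- Harnack and gradient bounds with constant `K` for a nonnegative function on `ℤ^d`: its values at
neighbouring points are comparable, and its symmetric differences at `x` are at most `K f x / ‖x‖`
(the last bound is multiplied out, so that it is vacuous at `x = 0`). -/
structure IsHarnack (d : ℕ) (K : ℝ) (f : (Fin d → ℤ) → ℝ) : Prop where
  nonneg : 0 ≤ f
  sub_single_le : ∀ x i, f (x - Pi.single i 1) ≤ K * f x
  add_single_le : ∀ x i, f (x + Pi.single i 1) ≤ K * f x
  nrmZ_mul_abs_sub_le : ∀ x i,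
    nrmZ d x * |f (x - Pi.single i 1) - f (x + Pi.single i 1)| ≤ K * f x

lemma rpow_le_newtonPotential (hd : 2 ≤ d) {A v : ℝ} {x : Fin d → ℤ} (hv : 1 < v)
    (h : nrmZ d x ^ 2 + A + 1 = v) : v ^ (1 - d / 2 : ℝ) ≤ newtonPotential d A x := by
  have hd' : (2 : ℝ) ≤ d := by exact_mod_cast hd
  exact Real.rpow_le_rpow_of_nonpos (by linarith) (by linarith) (by linarith)

lemma exists_isHarnack_newtonPotential (hd : 2 ≤ d) :
    ∃ K ≥ 1, ∀ A ≥ 32, IsHarnack d K (newtonPotential d A) := by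
  obtain ⟨K, hK, hle, hsub⟩ := exists_one_add_rpow_le_and_abs_sub_le (1 - d / 2)
  refine ⟨max 1 (2 * K), le_max_left _ _, fun A hA ↦ ?_⟩
  have hv (x : Fin d → ℤ) : 32 < nrmZ d x ^ 2 + A + 1 := by linarith [sq_nonneg (nrmZ d x)]
  have hv₀ (x : Fin d → ℤ) : 0 < nrmZ d x ^ 2 + A + 1 := by linarith [hv x]
  have hu (x : Fin d → ℤ) := abs_two_mul_apply_div_lt (hv x) (x := x)
    (by linarith [sq_nonneg (nrmZ d x)])
  have hpos := newtonPotential_pos (d := d) (by linarith : 0 < A)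
  have hbound (x : Fin d → ℤ) {t : ℝ} (ht : t ≤ 2 * K) :
      (nrmZ d x ^ 2 + A + 1) ^ (1 - d / 2 : ℝ) * t ≤ max 1 (2 * K) * newtonPotential d A x := by
    have := hpos x
    rw [mul_comm]
    gcongr
    · exact ht.trans (le_max_right _ _)
    · exact rpow_le_newtonPotential hd (by linarith [hv x]) rfl
  refine ⟨fun x ↦ (hpos x).le, fun x i ↦ ?_, fun x i ↦ ?_, fun x i ↦ ?_⟩
  · rw [newtonPotential_sub_single (hv₀ x) rfl (hu x i), sub_eq_add_neg 1]
    exact hbound x ((hle _ (by rw [abs_neg]; exact hu x i)).trans (by linarith))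
  · rw [newtonPotential_add_single (hv₀ x) rfl (hu x i)]
    exact hbound x ((hle _ (hu x i)).trans (by linarith))
  · rw [newtonPotential_sub_single (hv₀ x) rfl (hu x i),
      newtonPotential_add_single (hv₀ x) rfl (hu x i), ← mul_sub, abs_mul,
      abs_of_pos (Real.rpow_pos_of_pos (hv₀ x) _), mul_left_comm]
    refine hbound x ?_
    have hprod : nrmZ d x * |2 * x i / (nrmZ d x ^ 2 + A + 1)| ≤ 2 := by
      rw [abs_div, abs_mul, abs_two, abs_of_pos (hv₀ x), mul_div_assoc', div_le_iff₀ (hv₀ x)]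
      nlinarith [mul_le_mul_of_nonneg_left (abs_apply_le_nrmZ x i) (nrmZ_nonneg x)]
    calc _ ≤ nrmZ d x * (K * |2 * x i / (nrmZ d x ^ 2 + A + 1)|) := by
          gcongr
          · exact nrmZ_nonneg x
          · exact hsub _ (hu x i)
      _ ≤ 2 * K := by nlinarith

end NewtonPotential

/-! ### Transience and the lower bound for the Green's function -/

section Transience

variable {d : ℕ}

lemma exists_greenPartial_one_le_smul_newtonPotential {A : ℝ} (hA : 0 < A)
    (hsup : ∀ x, nbrAvg d (newtonPotential d A) x < newtonPotential d A x) :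
    ∃ C > (0 : ℝ), ∀ n, greenPartial d 1 n ≤ C • newtonPotential d A :=
  exists_greenPartial_one_le_smul (fun x ↦ (newtonPotential_pos hA x).le) (fun x ↦ (hsup x).le)
    (hsup 0)

lemma green_ne_top (hd : 2 < d) (x : Fin d → ℤ) : green d x ≠ ⊤ := by
  obtain ⟨A, hA, hsup⟩ :=
    ((eventually_gt_atTop 0).and (eventually_nbrAvg_newtonPotential_lt hd)).exists
  obtain ⟨C, -, hC⟩ := exists_greenPartial_one_le_smul_newtonPotential hA hsup
  rw [← greenK_zero]
  refine ne_top_of_le_ne_top ENNReal.ofReal_ne_top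
    (greenK_le_ofReal (b := C * newtonPotential d A x) zero_le_one fun n ↦ ?_)
  simpa using hC n x

/-- The potential with a very negative shift is dominated by `C g` by the maximum principle, and it
dominates the potential with shift `A` away from finitely many points. -/
lemma exists_newtonPotential_le_mul_green (hd : 2 < d) {A : ℝ} (hA : 0 < A) :
    ∃ C > 0, ∀ x, newtonPotential d A x ≤ C * (green d x).toReal := by
  have hgreen := toReal_green_pos (green_ne_top hd)
  obtain ⟨B, hB, hsub⟩ :=
    ((eventually_gt_atTop 0).and (eventually_lt_nbrAvg_newtonPotential_neg hd)).exists
  have hfar : ∀ᶠ x in cofinite, 2 * B ≤ nrmZ d x ^ 2 :=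
    ((tendsto_pow_atTop two_ne_zero).comp (tendsto_nrmZ_cofinite d)).eventually_ge_atTop _
  obtain ⟨C, -, hC⟩ := exists_forall_le_mul_of_lt_nbrAvg (S := {x | ¬2 * B ≤ nrmZ d x ^ 2}) hfar
    (tendsto_newtonPotential_cofinite hd (-B)) (fun x hx ↦ hsub x (not_not.1 hx)) hgreen
    (nbrAvg_toReal_green_le (green_ne_top hd))
  have hO : newtonPotential d A =O[cofinite] fun x ↦ (green d x).toReal := by
    refine .of_bound C (hfar.mono fun x hx ↦ ?_)
    rw [Real.norm_of_nonneg (hgreen x).le, Real.norm_of_nonneg (newtonPotential_pos hA x).le]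
    exact (newtonPotential_le_of_le hd.le (by linarith) (by linarith)).trans (hC x)
  obtain ⟨C', hC'pos, hC'⟩ := Asymptotics.bound_of_isBigO_cofinite hO
  exact ⟨C', hC'pos, fun x ↦ by
    simpa only [Real.norm_of_nonneg (hgreen x).le] using
      (le_abs_self _).trans (hC' (hgreen x).ne')⟩

end Transience

/-! ### Exponential tilting -/

section Tilt

variable {d : ℕ}

lemma nbrAvg_exp_mul (f : (Fin d → ℤ) → ℝ) (ε : ℝ) (i : Fin d) (x : Fin d → ℤ) :
    nbrAvg d (fun y ↦ Real.exp (-(ε * y i)) * f y) x =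
      Real.exp (-(ε * x i)) * (nbrAvg d f x + (2 * d : ℝ)⁻¹ *
        ((Real.exp ε - 1) * f (x - Pi.single i 1) +
          (Real.exp (-ε) - 1) * f (x + Pi.single i 1))) := by
  have hterm (j : Fin d) :
      Real.exp (-(ε * ((x - Pi.single j 1 : Fin d → ℤ) i : ℤ))) * f (x - Pi.single j 1) +
        Real.exp (-(ε * ((x + Pi.single j 1 : Fin d → ℤ) i : ℤ))) * f (x + Pi.single j 1) =
      Real.exp (-(ε * x i)) * (f (x - Pi.single j 1) + f (x + Pi.single j 1) +
        if j = i then (Real.exp ε - 1) * f (x - Pi.single i 1) +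
          (Real.exp (-ε) - 1) * f (x + Pi.single i 1) else 0) := by
    by_cases hj : j = i
    · subst hj
      have hsub : Real.exp (-(ε * (x j - 1))) = Real.exp (-(ε * x j)) * Real.exp ε := by
        rw [← Real.exp_add]; ring_nf
      have hadd : Real.exp (-(ε * (x j + 1))) = Real.exp (-(ε * x j)) * Real.exp (-ε) := by
        rw [← Real.exp_add]; ring_nf
      simp only [Pi.sub_apply, Pi.add_apply, Pi.single_eq_same, Int.cast_sub, Int.cast_add,
        Int.cast_one, if_true, hsub, hadd]
      ring
    · simp [hj, Ne.symm hj, mul_add]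
  simp only [nbrAvg_apply, hterm, ← Finset.mul_sum, Finset.sum_add_distrib, Finset.sum_ite_eq',
    Finset.mem_univ, if_true]
  ring

lemma nbrAvg_exp_mul_le {f : (Fin d → ℤ) → ℝ} {K ε : ℝ} (hf : IsHarnack d K f) (hε : |ε| ≤ 1)
    (i : Fin d) (x : Fin d → ℤ) :
    nbrAvg d (fun y ↦ Real.exp (-(ε * y i)) * f y) x ≤ Real.exp (-(ε * x i)) * (nbrAvg d f x +
      (|ε| * |f (x - Pi.single i 1) - f (x + Pi.single i 1)| + 2 * K * ε ^ 2 * f x)) := by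
  have hd : (1 : ℝ) ≤ d := by exact_mod_cast i.pos
  have hKf : 0 ≤ K * f x := (hf.nonneg _).trans (hf.sub_single_le x i)
  have hexp {t : ℝ} (ht : |t| ≤ 1) {b : ℝ} (hb₀ : 0 ≤ b) (hb : b ≤ K * f x) :
      (Real.exp t - 1) * b ≤ t * b + t ^ 2 * (K * f x) := by
    have hrem := (le_abs_self _).trans (Real.abs_exp_sub_one_sub_id_le ht)
    calc (Real.exp t - 1) * b = t * b + (Real.exp t - 1 - t) * b := by ring
      _ ≤ t * b + t ^ 2 * (K * f x) := by gcongr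
  have hsub := hexp hε (hf.nonneg _) (hf.sub_single_le x i)
  have hadd := hexp (by rwa [abs_neg]) (hf.nonneg _) (hf.add_single_le x i) (t := -ε)
  have hgrad := abs_mul ε _ ▸ le_abs_self (ε * (f (x - Pi.single i 1) - f (x + Pi.single i 1)))
  rw [nbrAvg_exp_mul]
  gcongr
  calc _ ≤ (2 * d : ℝ)⁻¹ *
        (|ε| * |f (x - Pi.single i 1) - f (x + Pi.single i 1)| + 2 * K * ε ^ 2 * f x) := by
        refine mul_le_mul_of_nonneg_left ?_ (by positivity)
        linarith
    _ ≤ _ := mul_le_of_le_one_left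
        (add_nonneg (by positivity) (by nlinarith [sq_nonneg ε]))
        (inv_le_one_of_one_le₀ (by linarith))

/-- The gradient bound makes the first-order cost of the tilt `O(|ε| / ‖x‖)`, which at distance
`1 / √α` is comparable with the second-order cost `O(ε ^ 2)` and with `α`. -/
lemma nbrAvg_exp_mul_le_one_add_mul {f : (Fin d → ℤ) → ℝ} {K ε α : ℝ} (hf : IsHarnack d K f)
    (hK : 1 ≤ K) (hsup : nbrAvg d f ≤ f) (hα : α ∈ Set.Icc 0 1) (hε : 3 * K * |ε| ≤ √α) (i : Fin d)
    {x : Fin d → ℤ} (hx : 1 ≤ √α * nrmZ d x) :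
    nbrAvg d (fun y ↦ Real.exp (-(ε * y i)) * f y) x ≤
      (1 + α) * (Real.exp (-(ε * x i)) * f x) := by
  have hfx : 0 ≤ f x := hf.nonneg x
  have hα' : √α ^ 2 = α := Real.sq_sqrt hα.1
  have hεα : |ε| ≤ √α := by nlinarith [abs_nonneg ε]
  have hε₁ : |ε| ≤ 1 := hεα.trans (Real.sqrt_le_one.2 hα.2)
  set δ := |f (x - Pi.single i 1) - f (x + Pi.single i 1)|
  have hδ : δ ≤ √α * (K * f x) :=
    calc δ ≤ (√α * nrmZ d x) * δ := le_mul_of_one_le_left (abs_nonneg _) hx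
      _ = √α * (nrmZ d x * δ) := mul_assoc _ _ _
      _ ≤ √α * (K * f x) :=
        mul_le_mul_of_nonneg_left (hf.nrmZ_mul_abs_sub_le x i) (Real.sqrt_nonneg α)
  have hcost : K * |ε| * √α + 2 * K * ε ^ 2 ≤ α :=
    calc _ = K * |ε| * (√α + 2 * |ε|) := by rw [← sq_abs ε]; ring
      _ ≤ √α / 3 * (√α + 2 * √α) := by gcongr; linarith
      _ = α := by linear_combination hα'
  calc _ ≤ Real.exp (-(ε * x i)) * (f x + (|ε| * (√α * (K * f x)) + 2 * K * ε ^ 2 * f x)) := by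
        refine (nbrAvg_exp_mul_le hf hε₁ i x).trans ?_
        gcongr
        exact hsup x
    _ = Real.exp (-(ε * x i)) * ((1 + (K * |ε| * √α + 2 * K * ε ^ 2)) * f x) := by ring
    _ ≤ Real.exp (-(ε * x i)) * ((1 + α) * f x) := by gcongr
    _ = (1 + α) * (Real.exp (-(ε * x i)) * f x) := by ring

/-- The tilt of `f` is a supersolution of the killed recursion off the ball of radius `1 / √α`,
inside which the tilt is bounded below. -/
lemma greenPartial_le_exp_mul {f : (Fin d → ℤ) → ℝ} {K C ε α : ℝ} (hf : IsHarnack d K f)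
    (hK : 1 ≤ K) (hsup : nbrAvg d f ≤ f) (hC₀ : 0 ≤ C) (hC : ∀ n, greenPartial d 1 n ≤ C • f)
    (hα : α ∈ Set.Icc 0 1) (hε : 3 * K * |ε| ≤ √α) (i : Fin d) (n : ℕ) (x : Fin d → ℤ) :
    greenPartial d (1 - α) n x ≤ C * Real.exp 1 * (Real.exp (-(ε * x i)) * f x) := by
  have hα₁ : 0 ≤ 1 - α := sub_nonneg.2 hα.2
  have hC₁ : 0 ≤ C * Real.exp 1 := by positivity
  set tilt : (Fin d → ℤ) → ℝ := fun y ↦ Real.exp (-(ε * y i)) * f y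
  have htilt : 0 ≤ tilt := fun y ↦ mul_nonneg (Real.exp_pos _).le (hf.nonneg y)
  refine greenPartial_le_of_nbrAvg_le hα₁ (smul_nonneg hC₁ htilt)
    (D := {y | 1 ≤ √α * nrmZ d y}) (fun y hy ↦ ?_) (fun y hy m ↦ ?_) n x
  · have hy₀ : y ≠ 0 := by
      rintro rfl
      norm_num [nrmZ] at hy
    have hkill : (1 - α) * nbrAvg d tilt y ≤ tilt y :=
      calc _ ≤ (1 - α) * ((1 + α) * tilt y) := by
            gcongr
            exact nbrAvg_exp_mul_le_one_add_mul hf hK hsup hα hε i hy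
        _ ≤ tilt y := by nlinarith [mul_nonneg (sq_nonneg α) (htilt y)]
    simp only [Pi.add_apply, Pi.single_eq_of_ne hy₀, zero_add, map_smul, Pi.smul_apply, smul_eq_mul]
    rw [mul_left_comm]
    gcongr
  · have hεy : ε * y i ≤ 1 :=
      calc ε * y i ≤ |ε| * |(y i : ℝ)| := (le_abs_self _).trans_eq (abs_mul _ _)
        _ ≤ √α * nrmZ d y := by
          gcongr
          · nlinarith [abs_nonneg ε]
          · exact abs_apply_le_nrmZ y i
        _ ≤ 1 := (not_le.1 hy).le
    calc greenPartial d (1 - α) m y ≤ C * f y :=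
          (greenPartial_mono_left hα₁ (sub_le_self _ hα.1) m y).trans (hC m y)
      _ ≤ C * (Real.exp (1 + -(ε * y i)) * f y) := by
        gcongr
        exact le_mul_of_one_le_left (hf.nonneg y) (Real.one_le_exp (by linarith))
      _ = C * Real.exp 1 * tilt y := by rw [Real.exp_add]; ring

lemma greenPartial_le_exp_nrmZ_mul (hd : 0 < d) {f : (Fin d → ℤ) → ℝ} {K C α : ℝ}
    (hf : IsHarnack d K f) (hK : 1 ≤ K) (hsup : nbrAvg d f ≤ f) (hC₀ : 0 ≤ C)
    (hC : ∀ n, greenPartial d 1 n ≤ C • f) (hα : α ∈ Set.Icc 0 1) (n : ℕ) (x : Fin d → ℤ) :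
    greenPartial d (1 - α) n x ≤
      C * Real.exp 1 * (Real.exp (-((3 * K * √d)⁻¹ * nrmZ d x * √α)) * f x) := by
  obtain ⟨i, hi⟩ := exists_nrmZ_le_sqrt_mul_abs_apply hd x
  have hK₀ : 0 < K := by linarith
  have : (0 : ℝ) < √d := Real.sqrt_pos.2 (by exact_mod_cast hd)
  obtain ⟨s, hs, hsx⟩ : ∃ s : ℝ, |s| = 1 ∧ s * x i = |(x i : ℝ)| := by
    obtain h | h := abs_choice (x i : ℝ)
    · exact ⟨1, abs_one, by rw [one_mul, h]⟩
    · exact ⟨-1, by norm_num, by rw [neg_one_mul, h]⟩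
  have hε : 3 * K * |√α / (3 * K) * s| = √α := by
    rw [abs_mul, hs, mul_one, abs_of_nonneg (by positivity),
      mul_div_cancel₀ _ (mul_pos three_pos hK₀).ne']
  refine (greenPartial_le_exp_mul hf hK hsup hC₀ hC hα hε.le i n x).trans ?_
  have hfx : 0 ≤ f x := hf.nonneg x
  have hexponent : (3 * K * √d)⁻¹ * nrmZ d x * √α ≤ √α / (3 * K) * s * x i :=
    calc _ ≤ (3 * K * √d)⁻¹ * (√d * |(x i : ℝ)|) * √α := by gcongr
      _ = √α / (3 * K) * s * x i := by rw [mul_assoc _ s, hsx]; field_simp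
  gcongr

end Tilt

theorem killed_green_far_bound_general (d : ℕ) (hd : 2 < d) :
    ∃ c C : ℝ, 0 < c ∧ 0 < C ∧ ∀ α ∈ Set.Icc (0 : ℝ) 1, ∀ x : Fin d → ℤ,
      greenK d α x ≤ ENNReal.ofReal (C * Real.exp (-(c * nrmZ d x * √α))) * green d x := by
  have hd₀ : 0 < d := by lia
  obtain ⟨K, hK, hharnack⟩ := exists_isHarnack_newtonPotential hd.le
  obtain ⟨A, hA, hsup⟩ :=
    ((eventually_ge_atTop 32).and (eventually_nbrAvg_newtonPotential_lt hd)).exists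
  obtain ⟨C₁, hC₁, hupper⟩ := exists_greenPartial_one_le_smul_newtonPotential (by linarith) hsup
  obtain ⟨C₂, hC₂, hlower⟩ := exists_newtonPotential_le_mul_green hd (A := A) (by linarith)
  refine ⟨(3 * K * √d)⁻¹, C₁ * Real.exp 1 * C₂, by positivity, by positivity, fun α hα x ↦ ?_⟩
  rw [← ENNReal.ofReal_toReal (green_ne_top hd x), ← ENNReal.ofReal_mul (by positivity)]
  refine greenK_le_ofReal hα.2 fun n ↦ ?_
  calc greenPartial d (1 - α) n x
    _ ≤ C₁ * Real.exp 1 *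
        (Real.exp (-((3 * K * √d)⁻¹ * nrmZ d x * √α)) * newtonPotential d A x) :=
      greenPartial_le_exp_nrmZ_mul hd₀ (hharnack A hA) hK (fun y ↦ (hsup y).le) hC₁.le hupper hα n x
    _ ≤ C₁ * Real.exp 1 *
        (Real.exp (-((3 * K * √d)⁻¹ * nrmZ d x * √α)) * (C₂ * (green d x).toReal)) := by
      gcongr
      exact hlower x
    _ = _ := by ring

/-- For `d > 2` and `c₀ > 0` there are constants `c, C > 0` and
`α₀ ∈ (0,1)`, depending only on `d` and `c₀`, such that for all `α ∈ (0, α₀)` and all `x`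
with `‖x‖ ≥ c₀/√α`: `g_α(x) ≤ C e^{−c‖x‖√α} g(x)`. -/
theorem killed_green_far_bound (d : ℕ) (hd : 2 < d) (c₀ : ℝ) (hc₀ : 0 < c₀) :
    ∃ c C α₀ : ℝ, 0 < c ∧ 0 < C ∧ α₀ ∈ Set.Ioo (0 : ℝ) 1 ∧
      ∀ α ∈ Set.Ioo (0 : ℝ) α₀, ∀ x : Fin d → ℤ, c₀ / Real.sqrt α ≤ nrmZ d x →
        greenK d α x ≤
          ENNReal.ofReal (C * Real.exp (-(c * nrmZ d x * Real.sqrt α))) * green d x := by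
  obtain ⟨c, C, hc, hC, h⟩ := killed_green_far_bound_general d hd
  exact ⟨c, C, 1 / 2, hc, hC, by norm_num, fun α hα x _ ↦ h α ⟨hα.1.le, by linarith [hα.2]⟩ x⟩
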